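/- If ρ ∈ H¹((0,1); L²(𝕋^d)) is periodic in time (ρ(·,0) = ρ(·,1)) and satisfies the adjoint equation −∂_s ρ(ξ,s) − (A(s)ρ(·,s))(ξ) = 0 for almost every (ξ,s) ∈ 𝕋^d × (0,1), then ρ is constant almost everywhere on 𝕋^{d+1}. -/

import Mathlib

open MeasureTheory

noncomputable section

/-- The periodicity cell `[0,1)^d`, identified with the torus `𝕋^d`. -/
def cube (d : ℕ) : Set (Fin d → ℝ) := Set.univ.pi fun _ => Set.Ico (0 : ℝ) 1

/-- The operator `A(s)` applied pointwise. -/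
def Aop {d : ℕ} (a : (Fin d → ℝ) → ℝ) (μ : (Fin d → ℝ) → (Fin d → ℝ) → ℝ → ℝ)
    (s : ℝ) (v : (Fin d → ℝ) → ℝ) (ξ : Fin d → ℝ) : ℝ :=
  ∫ η, a (ξ - η) * μ ξ η s * (v η - v ξ)

/-!
Testing the equation against `ρ` and integrating over a time period, periodicity kills the time
derivative, so `∫∫ (A(s)ρ) ρ = 0`. Reversing jumps preserves the measure `a(z) dz ⊗ dξ ⊗ ds` and,
by the symmetry of `a` and `μ`, the conductances, which turns this integral into `-1/2` times the
Dirichlet form `∫ a μ (ρ(ξ + z, s) - ρ(ξ, s))²`. Hence `ρ(ξ + z, s) = ρ(ξ, s)` for almost every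
jump; in particular `A(s)ρ = 0`, and the equation makes `ρ` independent of time. The
almost-everywhere periods of the resulting function of `ξ` form a subgroup that contains almost
every `z` with `a(z) > 0`, a set of positive measure, so by Steinhaus' theorem every vector is a
period.
-/

open Submodule Filter
open scoped Pointwise

section TimeIntegral

variable {g u : ℝ → ℝ} {t₀ t₁ : ℝ}

lemma integral_primitive_mul_self (hg : IntervalIntegrable g volume t₀ t₁) :
    ∫ s in t₀..t₁, (∫ τ in t₀..s, g τ) * g s = (∫ τ in t₀..t₁, g τ) ^ 2 / 2 := by
  set v : ℝ → ℝ := fun s => ∫ τ in t₀..s, g τ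
  have hac : AbsolutelyContinuousOnInterval v t₀ t₁ :=
    hg.absolutelyContinuousOnInterval_intervalIntegral Set.left_mem_uIcc
  have deriv_sq : ∫ s in t₀..t₁, deriv v s * v s + v s * deriv v s =
      2 * ∫ s in t₀..t₁, v s * g s := by
    rw [← intervalIntegral.integral_const_mul]
    refine intervalIntegral.integral_congr_ae ?_
    filter_upwards [hg.ae_hasDerivAt_integral] with s hs hmem
    rw [(hs (Set.uIoc_subset_uIcc hmem) t₀ Set.left_mem_uIcc).deriv]
    ring
  have v_left : v t₀ = 0 := intervalIntegral.integral_same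
  have := hac.integral_deriv_mul_eq_sub hac
  rw [deriv_sq, v_left] at this
  change _ = v t₁ ^ 2 / 2
  linarith

lemma integral_mul_eq_zero_of_eq_sub_primitive (hg : IntervalIntegrable g volume t₀ t₁)
    (hu : ∀ s ∈ Set.uIcc t₀ t₁, u s = u t₀ - ∫ τ in t₀..s, g τ) (hper : u t₁ = u t₀) :
    ∫ s in t₀..t₁, g s * u s = 0 := by
  have hg_zero : ∫ τ in t₀..t₁, g τ = 0 := by linarith [hu t₁ Set.right_mem_uIcc]
  have hcont : ContinuousOn (fun s => ∫ τ in t₀..s, g τ) (Set.uIcc t₀ t₁) :=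
    (hg.absolutelyContinuousOnInterval_intervalIntegral Set.left_mem_uIcc).continuousOn
  calc ∫ s in t₀..t₁, g s * u s
      = ∫ s in t₀..t₁, (u t₀ * g s - (∫ τ in t₀..s, g τ) * g s) := by
        refine intervalIntegral.integral_congr fun s hs => ?_
        simp only [hu s hs]
        ring
    _ = u t₀ * (∫ s in t₀..t₁, g s) - (∫ s in t₀..t₁, g s) ^ 2 / 2 := by
        rw [intervalIntegral.integral_sub (hg.const_mul _) (hg.continuousOn_mul hcont),
          intervalIntegral.integral_const_mul, integral_primitive_mul_self hg]
    _ = 0 := by simp [hg_zero]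

end TimeIntegral

section Reversible

variable {Ω : Type*} {Φ : Ω → Ω} {w f g : Ω → ℝ}

lemma mul_sub_sq_eq_neg_add_comp (hw : ∀ x, w (Φ x) = w x) (hf : ∀ x, f (Φ x) = g x)
    (hg : ∀ x, g (Φ x) = f x) :
    (fun x => w x * (g x - f x) ^ 2) =
      -((fun x => w x * (g x - f x) * f x) + (fun x => w x * (g x - f x) * f x) ∘ Φ) := by
  ext x
  simp only [Pi.neg_apply, Pi.add_apply, Function.comp_apply, hw, hf, hg]
  ring

variable [MeasurableSpace Ω] {κ : Measure Ω}

lemma integral_mul_sub_sq_eq_neg_two_mul (hΦ : MeasurePreserving Φ κ κ)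
    (hw : ∀ x, w (Φ x) = w x) (hf : ∀ x, f (Φ x) = g x) (hg : ∀ x, g (Φ x) = f x)
    (hint : Integrable (fun x => w x * (g x - f x) * f x) κ) :
    ∫ x, w x * (g x - f x) ^ 2 ∂κ = -2 * ∫ x, w x * (g x - f x) * f x ∂κ := by
  have integral_comp : ∫ x, ((fun x => w x * (g x - f x) * f x) ∘ Φ) x ∂κ =
      ∫ x, w x * (g x - f x) * f x ∂κ := by
    conv_rhs => rw [← hΦ.map_eq]
    exact (integral_map hΦ.aemeasurable (hΦ.map_eq ▸ hint.aestronglyMeasurable)).symm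
  rw [mul_sub_sq_eq_neg_add_comp hw hf hg, integral_neg',
    integral_add' hint (hΦ.integrable_comp_of_integrable hint), integral_comp]
  ring

lemma ae_eq_of_integral_mul_sub_mul_eq_zero (hΦ : MeasurePreserving Φ κ κ)
    (hw : ∀ x, w (Φ x) = w x) (hf : ∀ x, f (Φ x) = g x) (hg : ∀ x, g (Φ x) = f x)
    (hpos : ∀ x, 0 < w x) (hint : Integrable (fun x => w x * (g x - f x) * f x) κ)
    (hzero : ∫ x, w x * (g x - f x) * f x ∂κ = 0) : g =ᵐ[κ] f := by
  have hint_sq : Integrable (fun x => w x * (g x - f x) ^ 2) κ := by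
    rw [mul_sub_sq_eq_neg_add_comp hw hf hg]
    exact (hint.add (hΦ.integrable_comp_of_integrable hint)).neg
  have hzero_sq : ∫ x, w x * (g x - f x) ^ 2 ∂κ = 0 := by
    rw [integral_mul_sub_sq_eq_neg_two_mul hΦ hw hf hg hint, hzero, mul_zero]
  have hnonneg : 0 ≤ fun x => w x * (g x - f x) ^ 2 := fun x =>
    mul_nonneg (hpos x).le (sq_nonneg _)
  filter_upwards [(integral_eq_zero_iff_of_nonneg hnonneg hint_sq).1 hzero_sq] with x hx
  exact sub_eq_zero.1 (pow_eq_zero_iff two_ne_zero |>.1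
    ((mul_eq_zero.1 hx).resolve_left (hpos x).ne'))

end Reversible

section Translation

variable {G β : Type*} [AddCommGroup G] [MeasurableSpace G]

section Periods

variable [MeasurableAdd G] {m : Measure G} [m.IsAddLeftInvariant]

/-- The subgroup of almost-everywhere periods of `f`. -/
def aePeriods (m : Measure G) [m.IsAddLeftInvariant] (f : G → β) : AddSubgroup G where
  carrier := {z | ∀ᵐ x ∂m, f (x + z) = f x}
  zero_mem' := by simp
  add_mem' {z z'} hz hz' := by
    change ∀ᵐ x ∂m, f (x + (z + z')) = f x
    filter_upwards [(measurePreserving_add_right m z).quasiMeasurePreserving.ae hz', hz]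
      with x hxz hx
    rw [← add_assoc, hxz, hx]
  neg_mem' {z} hz := by
    change ∀ᵐ x ∂m, f (x + -z) = f x
    filter_upwards [(measurePreserving_add_right m (-z)).quasiMeasurePreserving.ae hz] with x hx
    rw [← hx, neg_add_cancel_right]

lemma mem_aePeriods {f : G → β} {z : G} :
    z ∈ aePeriods m f ↔ ∀ᵐ x ∂m, f (x + z) = f x := Iff.rfl

end Periods

lemma exists_ae_eq_const_of_aePeriods_eq_top {m : Measure G} [m.IsAddLeftInvariant] [SFinite m]
    [(ae m).NeBot] [MeasurableAdd₂ G] [MeasurableSpace β] [MeasurableEq β] {f : G → β}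
    (hf : Measurable f) (h : aePeriods m f = ⊤) : ∃ c, ∀ᵐ x ∂m, f x = c := by
  have hall (z : G) : ∀ᵐ x ∂m, f (x + z) = f x := mem_aePeriods.1 (h ▸ AddSubgroup.mem_top z)
  have hmeas : MeasurableSet {p : G × G | f (p.1 + p.2) = f p.1} :=
    measurableSet_eq_fun (hf.comp measurable_add) (hf.comp measurable_fst)
  have hswap : ∀ᵐ x ∂m, ∀ᵐ z ∂m, f (x + z) = f x :=
    (Measure.ae_ae_comm hmeas).2 (Eventually.of_forall hall)
  obtain ⟨x, hx⟩ := hswap.exists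
  refine ⟨f x, ?_⟩
  filter_upwards [(measurePreserving_add_left m (-x)).quasiMeasurePreserving.ae hx] with y hy
  rwa [add_neg_cancel_left] at hy

lemma addSubgroup_eq_top_of_ae_mem [TopologicalSpace G] [IsTopologicalAddGroup G] [BorelSpace G]
    [LocallyCompactSpace G] [ConnectedSpace G] {m : Measure G} [m.IsAddHaarMeasure]
    [m.InnerRegular] {H : AddSubgroup G} {α : Measure G} [NeZero α] (hα : α ≪ m)
    (hH : ∀ᵐ z ∂α, z ∈ H) : H = ⊤ := by
  obtain ⟨S, hSH, hSmeas, hSα⟩ :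
      ∃ S ⊆ (H : Set G), MeasurableSet S ∧ α Sᶜ = 0 := by
    refine ⟨(toMeasurable α (H : Set G)ᶜ)ᶜ, ?_, (measurableSet_toMeasurable _ _).compl, ?_⟩
    · exact Set.compl_subset_comm.1 (subset_toMeasurable _ _)
    · rw [compl_compl, measure_toMeasurable]
      exact hH
  have hSm : 0 < m S := by
    refine pos_iff_ne_zero.2 fun h => NeZero.ne α ?_
    rw [← Measure.measure_univ_eq_zero, ← Set.union_compl_self S]
    exact measure_union_null (hα h) hSα
  have hnhds : (H : Set G) ∈ nhds 0 := by
    refine mem_of_superset (Measure.sub_mem_nhds_zero_of_addHaar_pos m S hSmeas hSm) ?_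
    rintro _ ⟨x, hx, y, hy, rfl⟩
    exact H.sub_mem (hSH hx) (hSH hy)
  have hopen : IsOpen (H : Set G) := H.isOpen_of_mem_nhds hnhds
  exact SetLike.coe_injective
    (IsClopen.eq_univ ⟨H.isClosed_of_isOpen hopen, hopen⟩ ⟨0, H.zero_mem⟩)

end Translation

section Density

variable {G : Type*} [AddCommGroup G] [MeasurableSpace G] [MeasurableNeg G] {m : Measure G}
  [m.IsNegInvariant]

lemma isNegInvariant_withDensity {f : G → ENNReal} (hf_even : f.Even) :
    (m.withDensity f).IsNegInvariant := by
  refine ⟨Measure.ext fun S hS => ?_⟩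
  have hneg := Measure.measurePreserving_neg m
  rw [Measure.neg_def, Measure.map_apply measurable_neg hS, withDensity_apply _ hS,
    withDensity_apply _ (measurable_neg hS),
    ← hneg.setLIntegral_comp_preimage_emb (MeasurableEquiv.neg G).measurableEmbedding]
  simp only [hf_even _, ← Set.preimage_comp, neg_comp_neg, Set.preimage_id]

end Density

section Lattice

variable {E ι : Type*} [NormedAddCommGroup E] [NormedSpace ℝ E] (b : Module.Basis ι ℝ E)

section Finite

variable [Finite ι]

instance countable_toAddSubgroup_span : Countable (span ℤ (Set.range b)).toAddSubgroup :=
  inferInstanceAs (Countable (span ℤ (Set.range b)))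

variable [MeasurableSpace E] [BorelSpace E]

instance isFiniteMeasure_restrict_fundamentalDomain {m : Measure E} [IsFiniteMeasureOnCompacts m] :
    IsFiniteMeasure (m.restrict (ZSpan.fundamentalDomain b)) :=
  have := Module.Basis.finiteDimensional_of_finite b
  isFiniteMeasure_restrict.2 (ZSpan.fundamentalDomain_isBounded b).measure_lt_top.ne

variable {m : Measure E} [m.IsAddLeftInvariant]

lemma ae_of_ae_restrict_fundamentalDomain {P : E → Prop}
    (hP : ∀ v ∈ span ℤ (Set.range b), Function.Periodic P v)
    (h : ∀ᵐ x ∂m.restrict (ZSpan.fundamentalDomain b), P x) : ∀ᵐ x ∂m, P x := by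
  have hnull : m ({x | ¬ P x} ∩ ZSpan.fundamentalDomain b) = 0 := by
    rwa [ae_iff, Measure.restrict_apply' (ZSpan.fundamentalDomain_measurableSet b)] at h
  refine (ZSpan.isAddFundamentalDomain' b m).measure_zero_of_invariant _ (fun v => ?_) hnull
  ext x
  rw [Set.mem_vadd_set_iff_neg_vadd_mem]
  change ¬ P (-(v : E) + x) ↔ ¬ P x
  rw [neg_add_eq_sub, (hP _ v.2).sub_eq]

end Finite

variable [Fintype ι]

lemma apply_fract_of_periodic {β : Type*} {f : E → β}
    (hf : ∀ v ∈ span ℤ (Set.range b), Function.Periodic f v) (x : E) :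
    f (ZSpan.fract b x) = f x := by
  rw [ZSpan.fract_apply]
  exact (hf _ (ZSpan.floor b x).2).sub_eq x

variable [MeasurableSpace E] [BorelSpace E]

lemma measurable_fract_zspan : Measurable (ZSpan.fract b) := by
  have := Module.Basis.finiteDimensional_of_finite b
  have fract_eq_sum : ZSpan.fract b = fun x => ∑ i, Int.fract (b.coord i x) • b i := by
    ext x
    rw [← b.sum_repr (ZSpan.fract b x)]
    simp only [ZSpan.repr_fract_apply, Module.Basis.coord_apply]
  have hcoord (i : ι) : Measurable (b.coord i) :=
    (b.coord i).continuous_of_finiteDimensional.measurable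
  rw [fract_eq_sum]
  fun_prop

lemma measurePreserving_fract_add {m : Measure E} [m.IsAddLeftInvariant] (z : E) :
    MeasurePreserving (fun x => ZSpan.fract b (x + z))
      (m.restrict (ZSpan.fundamentalDomain b)) (m.restrict (ZSpan.fundamentalDomain b)) := by
  set D := ZSpan.fundamentalDomain b
  have hmeas : Measurable fun x => ZSpan.fract b (x + z) :=
    (measurable_fract_zspan b).comp (measurable_add_const z)
  refine ⟨hmeas, Measure.ext fun S hS => ?_⟩
  have hfund := ZSpan.isAddFundamentalDomain' b m
  set A := ZSpan.fract b ⁻¹' S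
  have hA : MeasurableSet A := measurable_fract_zspan b hS
  have hA_inv (v : (span ℤ (Set.range b)).toAddSubgroup) : (fun x => v +ᵥ x) ⁻¹' A = A := by
    ext x
    change ZSpan.fract b ((v : E) + x) ∈ S ↔ ZSpan.fract b x ∈ S
    rw [ZSpan.fract_zSpan_add b x v.2]
  rw [Measure.map_apply hmeas hS, Measure.restrict_apply (hmeas hS), Measure.restrict_apply hS]
  calc m ((fun x => ZSpan.fract b (x + z)) ⁻¹' S ∩ D)
      = m (A ∩ (z +ᵥ D)) := by
        rw [← measure_preimage_add_right m z (A ∩ (z +ᵥ D))]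
        congr 1
        ext x
        simp [A, Set.mem_vadd_set_iff_neg_vadd_mem]
    _ = m (A ∩ D) := (hfund.vadd_of_comm z).measure_set_eq hfund hA hA_inv
    _ = m (S ∩ D) := by
        congr 1
        ext x
        simp only [A, Set.mem_inter_iff, Set.mem_preimage, and_congr_left_iff]
        intro hx
        rw [ZSpan.fract_eq_self.2 hx]

end Lattice

section JumpOperator

variable {E Y : Type*} [Add E]

/-- The flux `w(ξ, ξ + z, y) (u(ξ + z, y) - u(ξ, y))` along the jump from `ξ` to `ξ + z`, which is
encoded as the triple `(z, ξ, y)`; `y` is a parameter. -/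
def jumpFlux (w : E → E → Y → ℝ) (u : E → Y → ℝ) (p : E × E × Y) : ℝ :=
  w p.2.1 (p.2.1 + p.1) p.2.2 * (u (p.2.1 + p.1) p.2.2 - u p.2.1 p.2.2)

variable [MeasurableSpace E]

/-- The generator of the jump process with jump measure `α` and conductances `w`, applied to `u` at
the parameter value `y`. With `α = a(z) dz` and `y` the time `s` it is the operator `A(s)`. -/
def jumpOp (α : Measure E) (w : E → E → Y → ℝ) (u : E → Y → ℝ) (ξ : E) (y : Y) : ℝ :=
  ∫ z, jumpFlux w u (z, ξ, y) ∂α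

lemma jumpOp_ae_eq_zero_of_ae_jump_eq [MeasurableSpace Y] {α : Measure E} {γ : Measure (E × Y)}
    [SFinite α] [SFinite γ] {w : E → E → Y → ℝ} {u : E → Y → ℝ}
    (h : ∀ᵐ p ∂α.prod γ, u (p.2.1 + p.1) p.2.2 = u p.2.1 p.2.2) :
    ∀ᵐ q ∂γ, jumpOp α w u q.1 q.2 = 0 := by
  have hswap := Measure.measurePreserving_swap.quasiMeasurePreserving.ae h
  filter_upwards [Measure.ae_ae_of_ae_prod hswap] with q hq
  refine integral_eq_zero_of_ae ?_
  filter_upwards [hq] with z hz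
  simp only [Prod.swap_prod_mk] at hz
  simp only [jumpFlux, hz, sub_self, mul_zero, Pi.zero_apply]

end JumpOperator

section Conductance

variable {E Y ι : Type*} [NormedAddCommGroup E] [NormedSpace ℝ E] [MeasurableSpace E]
  [MeasurableSpace Y] {b : Module.Basis ι ℝ E} {w : E → E → Y → ℝ}

/-- The product of `m`, restricted to the fundamental domain of the lattice (a copy of the torus),
and the measure `ν` on the parameter space. -/
abbrev cellMeasure (b : Module.Basis ι ℝ E) (m : Measure E) (ν : Measure Y) : Measure (E × Y) :=
  (m.restrict (ZSpan.fundamentalDomain b)).prod ν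

/-- Bounded positive measurable conductances, symmetric and invariant under simultaneous translation
of both endpoints by the lattice spanned by `b`. -/
structure IsPeriodicConductance (b : Module.Basis ι ℝ E) (w : E → E → Y → ℝ) : Prop where
  measurable : Measurable fun p : E × E × Y => w p.1 p.2.1 p.2.2
  symm : ∀ ξ η, w ξ η = w η ξ
  periodic : ∀ v ∈ span ℤ (Set.range b), ∀ ξ η, w (ξ + v) (η + v) = w ξ η
  pos : ∀ ξ η y, 0 < w ξ η y
  bddAbove : ∃ M, ∀ ξ η y, w ξ η y ≤ M

lemma IsPeriodicConductance.measurable_jump [BorelSpace E] [FiniteDimensional ℝ E]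
    (hw : IsPeriodicConductance b w) :
    Measurable fun p : E × E × Y => w p.2.1 (p.2.1 + p.1) p.2.2 :=
  hw.measurable.comp (f := fun p : E × E × Y => (p.2.1, p.2.1 + p.1, p.2.2)) (by fun_prop)

end Conductance

section Jump

variable {E Y ι : Type*} [NormedAddCommGroup E] [NormedSpace ℝ E] [Fintype ι]
  {b : Module.Basis ι ℝ E}

/-- The reversal of jumps, an involution up to lattice translations: the jump `(z, ξ, y)` is
traversed backwards, after a lattice translation that puts its new starting point in the
fundamental domain. -/
def jumpFlip (b : Module.Basis ι ℝ E) (p : E × E × Y) : E × E × Y :=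
  (-p.1, ZSpan.fract b (p.2.1 + p.1), p.2.2)

lemma apply_jumpFlip_start {u : E → Y → ℝ}
    (hu : ∀ v ∈ span ℤ (Set.range b), Function.Periodic u v) (p : E × E × Y) :
    u (jumpFlip b p).2.1 (jumpFlip b p).2.2 = u (p.2.1 + p.1) p.2.2 :=
  congrFun (apply_fract_of_periodic b hu _) _

lemma jumpFlip_end_eq_sub_floor (p : E × E × Y) :
    (jumpFlip b p).2.1 + (jumpFlip b p).1 = p.2.1 - ZSpan.floor b (p.2.1 + p.1) := by
  simp only [jumpFlip, ZSpan.fract_apply]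
  abel

lemma apply_jumpFlip_end {u : E → Y → ℝ}
    (hu : ∀ v ∈ span ℤ (Set.range b), Function.Periodic u v) (p : E × E × Y) :
    u ((jumpFlip b p).2.1 + (jumpFlip b p).1) (jumpFlip b p).2.2 = u p.2.1 p.2.2 := by
  rw [jumpFlip_end_eq_sub_floor, (hu _ (ZSpan.floor b _).2).sub_eq]
  rfl

variable [MeasurableSpace E] [MeasurableSpace Y]

lemma IsPeriodicConductance.apply_jumpFlip {w : E → E → Y → ℝ} (hw : IsPeriodicConductance b w)
    (p : E × E × Y) :
    w (jumpFlip b p).2.1 ((jumpFlip b p).2.1 + (jumpFlip b p).1) (jumpFlip b p).2.2 =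
      w p.2.1 (p.2.1 + p.1) p.2.2 := by
  have hstart : (jumpFlip b p).2.1 = p.2.1 + p.1 - ZSpan.floor b (p.2.1 + p.1) := rfl
  rw [jumpFlip_end_eq_sub_floor, hstart, hw.symm p.2.1,
    ← hw.periodic _ (ZSpan.floor b (p.2.1 + p.1)).2 (_ - _), sub_add_cancel, sub_add_cancel]
  rfl

variable [BorelSpace E] [FiniteDimensional ℝ E] {m α : Measure E} [m.IsAddHaarMeasure]
  [α.IsNegInvariant] {ν : Measure Y} [SFinite ν]

lemma measurePreserving_jumpFlip [SFinite α] :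
    MeasurePreserving (jumpFlip b) (α.prod (cellMeasure b m ν)) (α.prod (cellMeasure b m ν)) := by
  refine MeasurePreserving.skew_product
    (g := fun z (q : E × Y) => (ZSpan.fract b (q.1 + z), q.2))
    (Measure.measurePreserving_neg α) ?_ (Eventually.of_forall fun z => ?_)
  · unfold Function.uncurry
    exact ((measurable_fract_zspan b).comp (by fun_prop)).prodMk (by fun_prop)
  · exact ((measurePreserving_fract_add b z).prod (MeasurePreserving.id ν)).map_eq

end Jump

section DirichletForm

variable {E Y ι : Type*} [NormedAddCommGroup E] [NormedSpace ℝ E] [FiniteDimensional ℝ E] [Finite ι]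
  [MeasurableSpace E] [BorelSpace E] [MeasurableSpace Y] {b : Module.Basis ι ℝ E}
  {m α : Measure E} [m.IsAddHaarMeasure] [α.IsNegInvariant] [IsFiniteMeasure α]
  {ν : Measure Y} [SFinite ν] {w : E → E → Y → ℝ} {u : E → Y → ℝ}

lemma memLp_jumpFlux (hw : IsPeriodicConductance b w)
    (hu_per : ∀ v ∈ span ℤ (Set.range b), Function.Periodic u v)
    (huL2 : MemLp (Function.uncurry u) 2 (cellMeasure b m ν)) :
    MemLp (jumpFlux w u) 2 (α.prod (cellMeasure b m ν)) := by
  have := Fintype.ofFinite ι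
  obtain ⟨M, hM⟩ := hw.bddAbove
  have hstart : MemLp (fun p : E × E × Y => u p.2.1 p.2.2) 2 (α.prod (cellMeasure b m ν)) :=
    huL2.comp_snd α
  have hend : MemLp (fun p : E × E × Y => u (p.2.1 + p.1) p.2.2) 2
      (α.prod (cellMeasure b m ν)) := by
    simpa only [Function.comp_def, apply_jumpFlip_start hu_per] using
      hstart.comp_measurePreserving measurePreserving_jumpFlip
  have hdiff := hend.sub hstart
  refine hdiff.of_le_mul (c := M)
    (hw.measurable_jump.aestronglyMeasurable.mul hdiff.aestronglyMeasurable)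
    (Eventually.of_forall fun p => ?_)
  simp only [jumpFlux, norm_mul, Pi.sub_apply]
  gcongr
  rw [Real.norm_of_nonneg (hw.pos _ _ _).le]
  exact hM _ _ _

lemma integrable_jumpFlux_mul (hw : IsPeriodicConductance b w)
    (hu_per : ∀ v ∈ span ℤ (Set.range b), Function.Periodic u v)
    (huL2 : MemLp (Function.uncurry u) 2 (cellMeasure b m ν)) :
    Integrable (fun p => jumpFlux w u p * u p.2.1 p.2.2)
      (α.prod (cellMeasure b m ν)) :=
  (memLp_jumpFlux hw hu_per huL2).integrable_mul (huL2.comp_snd α)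

lemma integrable_jumpOp [IsFiniteMeasure ν] (hw : IsPeriodicConductance b w)
    (hu_per : ∀ v ∈ span ℤ (Set.range b), Function.Periodic u v)
    (huL2 : MemLp (Function.uncurry u) 2 (cellMeasure b m ν)) :
    Integrable (fun q : E × Y => jumpOp α w u q.1 q.2)
      (cellMeasure b m ν) :=
  ((memLp_jumpFlux hw hu_per huL2).integrable one_le_two).integral_prod_right

lemma integral_jumpFlux_mul (hw : IsPeriodicConductance b w)
    (hu_per : ∀ v ∈ span ℤ (Set.range b), Function.Periodic u v)
    (huL2 : MemLp (Function.uncurry u) 2 (cellMeasure b m ν)) :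
    ∫ p, jumpFlux w u p * u p.2.1 p.2.2
        ∂α.prod (cellMeasure b m ν) =
      ∫ ξ in ZSpan.fundamentalDomain b, ∫ y, jumpOp α w u ξ y * u ξ y ∂ν ∂m := by
  have hint := integrable_jumpFlux_mul (α := α) hw hu_per huL2
  have integral_fiber (q : E × Y) :
      ∫ z, jumpFlux w u (z, q) * u q.1 q.2 ∂α = jumpOp α w u q.1 q.2 * u q.1 q.2 :=
    integral_mul_const _ _
  have hint_fiber := hint.integral_prod_right
  simp only [integral_fiber] at hint_fiber
  rw [integral_prod_symm _ hint]
  simp only [integral_fiber]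
  exact integral_prod _ hint_fiber

lemma ae_jump_eq_of_integral_jumpOp_mul_eq_zero (hw : IsPeriodicConductance b w)
    (hu_per : ∀ v ∈ span ℤ (Set.range b), Function.Periodic u v)
    (huL2 : MemLp (Function.uncurry u) 2 (cellMeasure b m ν))
    (hzero : ∀ᵐ ξ ∂m.restrict (ZSpan.fundamentalDomain b),
      ∫ y, jumpOp α w u ξ y * u ξ y ∂ν = 0) :
    ∀ᵐ p ∂α.prod (cellMeasure b m ν),
      u (p.2.1 + p.1) p.2.2 = u p.2.1 p.2.2 := by
  have := Fintype.ofFinite ι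
  refine ae_eq_of_integral_mul_sub_mul_eq_zero
    (w := fun p : E × E × Y => w p.2.1 (p.2.1 + p.1) p.2.2) measurePreserving_jumpFlip
    hw.apply_jumpFlip (apply_jumpFlip_start hu_per) (apply_jumpFlip_end hu_per)
    (fun p => hw.pos _ _ _) (integrable_jumpFlux_mul hw hu_per huL2) ?_
  exact (integral_jumpFlux_mul hw hu_per huL2).trans (integral_eq_zero_of_ae hzero)

end DirichletForm

section Evolution

variable {E ι : Type*} [NormedAddCommGroup E] [NormedSpace ℝ E] [Finite ι]
  [MeasurableSpace E] [BorelSpace E] {b : Module.Basis ι ℝ E} {m α : Measure E}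
  [m.IsAddHaarMeasure] {w : E → E → ℝ → ℝ} {u : E → ℝ → ℝ}
  {t₀ t₁ : ℝ}

lemma ae_forall_eq_initial_of_ae_jumpOp_eq_zero
    (hu_per : ∀ v ∈ span ℤ (Set.range b), Function.Periodic u v)
    (hu : ∀ᵐ ξ ∂m, ∀ s ∈ Set.Icc t₀ t₁, u ξ s = u ξ t₀ - ∫ τ in t₀..s, jumpOp α w u ξ τ)
    (hzero : ∀ᵐ q ∂cellMeasure b m (volume.restrict (Set.Ioc t₀ t₁)),
      jumpOp α w u q.1 q.2 = 0) :
    ∀ᵐ ξ ∂m, ∀ s ∈ Set.Icc t₀ t₁, u ξ s = u ξ t₀ := by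
  refine ae_of_ae_restrict_fundamentalDomain b (fun v hv ξ => by rw [hu_per v hv ξ]) ?_
  filter_upwards [ae_restrict_of_ae hu, Measure.ae_ae_of_ae_prod hzero] with ξ hξ hξ_zero s hs
  have integral_zero : ∫ τ in t₀..s, jumpOp α w u ξ τ = 0 := by
    rw [intervalIntegral.integral_of_le hs.1]
    exact integral_eq_zero_of_ae
      (ae_mono (Measure.restrict_mono (Set.Ioc_subset_Ioc_right hs.2) le_rfl) hξ_zero)
  rw [hξ s hs, integral_zero, sub_zero]

variable [FiniteDimensional ℝ E]

lemma ae_mem_aePeriods_of_ae_jump_eq (ht : t₀ < t₁)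
    (hu_per : ∀ v ∈ span ℤ (Set.range b), Function.Periodic u v)
    (hconst : ∀ᵐ ξ ∂m, ∀ s ∈ Set.Icc t₀ t₁, u ξ s = u ξ t₀)
    (hjump : ∀ᵐ p ∂α.prod (cellMeasure b m (volume.restrict (Set.Ioc t₀ t₁))),
      u (p.2.1 + p.1) p.2.2 = u p.2.1 p.2.2) :
    ∀ᵐ z ∂α, z ∈ aePeriods m fun ξ => u ξ t₀ := by
  have : NeZero (volume.restrict (Set.Ioc t₀ t₁)) := ⟨by simpa using ht⟩
  filter_upwards [Measure.ae_ae_of_ae_prod hjump] with z hz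
  refine ae_of_ae_restrict_fundamentalDomain b
    (fun v hv ξ => by simp only [add_right_comm, hu_per v hv _]) ?_
  have hconst_shift := (measurePreserving_add_right m z).quasiMeasurePreserving.ae hconst
  filter_upwards [Measure.ae_ae_of_ae_prod hz, ae_restrict_of_ae hconst,
    ae_restrict_of_ae hconst_shift] with ξ hξ hξ_const hξ_shift
  obtain ⟨s, hs_eq, hs⟩ := (hξ.and (ae_restrict_mem measurableSet_Ioc)).exists
  rw [← hξ_shift s (Set.Ioc_subset_Icc_self hs), ← hξ_const s (Set.Ioc_subset_Icc_self hs)]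
  exact hs_eq

variable [IsFiniteMeasure α] [α.IsNegInvariant]

lemma ae_integral_jumpOp_mul_eq_zero (ht : t₀ ≤ t₁) (hw : IsPeriodicConductance b w)
    (hu_per : ∀ v ∈ span ℤ (Set.range b), Function.Periodic u v)
    (huL2 : MemLp (Function.uncurry u) 2 (cellMeasure b m (volume.restrict (Set.Ioc t₀ t₁))))
    (hu_time : ∀ᵐ ξ ∂m, u ξ t₁ = u ξ t₀)
    (hu : ∀ᵐ ξ ∂m, ∀ s ∈ Set.Icc t₀ t₁, u ξ s = u ξ t₀ - ∫ τ in t₀..s, jumpOp α w u ξ τ) :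
    ∀ᵐ ξ ∂m.restrict (ZSpan.fundamentalDomain b),
      ∫ s in Set.Ioc t₀ t₁, jumpOp α w u ξ s * u ξ s = 0 := by
  filter_upwards [ae_restrict_of_ae hu, ae_restrict_of_ae hu_time,
    (integrable_jumpOp (α := α) hw hu_per huL2).prod_right_ae] with ξ hξ hξ_time hξ_int
  rw [← intervalIntegral.integral_of_le ht]
  refine integral_mul_eq_zero_of_eq_sub_primitive ?_ (by rwa [Set.uIcc_of_le ht]) hξ_time
  exact (intervalIntegrable_iff_integrableOn_Ioc_of_le ht).2 hξ_int

theorem exists_ae_forall_eq_const_of_eq_sub_integral_jumpOp [NeZero α] (hα : α ≪ m)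
    (ht : t₀ < t₁) (hw : IsPeriodicConductance b w) (hu_meas : Measurable fun ξ => u ξ t₀)
    (hu_per : ∀ v ∈ span ℤ (Set.range b), Function.Periodic u v)
    (huL2 : MemLp (Function.uncurry u) 2 (cellMeasure b m (volume.restrict (Set.Ioc t₀ t₁))))
    (hu_time : ∀ᵐ ξ ∂m, u ξ t₁ = u ξ t₀)
    (hu : ∀ᵐ ξ ∂m, ∀ s ∈ Set.Icc t₀ t₁, u ξ s = u ξ t₀ - ∫ τ in t₀..s, jumpOp α w u ξ τ) :
    ∃ c, ∀ᵐ ξ ∂m, ∀ s ∈ Set.Icc t₀ t₁, u ξ s = c := by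
  have hjump := ae_jump_eq_of_integral_jumpOp_mul_eq_zero hw hu_per huL2
    (ae_integral_jumpOp_mul_eq_zero ht.le hw hu_per huL2 hu_time hu)
  have hconst := ae_forall_eq_initial_of_ae_jumpOp_eq_zero hu_per hu
    (jumpOp_ae_eq_zero_of_ae_jump_eq hjump)
  have hperiods : aePeriods m (fun ξ => u ξ t₀) = ⊤ :=
    addSubgroup_eq_top_of_ae_mem hα (ae_mem_aePeriods_of_ae_jump_eq ht hu_per hconst hjump)
  obtain ⟨c, hc⟩ := exists_ae_eq_const_of_aePeriods_eq_top hu_meas hperiods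
  refine ⟨c, ?_⟩
  filter_upwards [hconst, hc] with ξ hξ hξc s hs
  rw [hξ s hs, hξc]

end Evolution

section Torus

variable {d : ℕ} {a : (Fin d → ℝ) → ℝ}

lemma exists_intCast_eq_of_mem_span_basisFun {v : Fin d → ℝ}
    (hv : v ∈ span ℤ (Set.range (Pi.basisFun ℝ (Fin d)))) :
    ∃ k : Fin d → ℤ, v = fun i => (k i : ℝ) := by
  rw [Module.Basis.mem_span_iff_repr_mem] at hv
  choose k hk using hv
  exact ⟨k, funext fun i => by simpa using (hk i).symm⟩

lemma cube_eq_fundamentalDomain (d : ℕ) :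
    cube d = ZSpan.fundamentalDomain (Pi.basisFun ℝ (Fin d)) :=
  ZSpan.fundamentalDomain_pi_basisFun.symm

lemma volume_restrict_cube_prod (S : Set ℝ) :
    (volume.restrict (cube d ×ˢ S) : Measure ((Fin d → ℝ) × ℝ)) =
      cellMeasure (Pi.basisFun ℝ (Fin d)) volume (volume.restrict S) := by
  rw [cube_eq_fundamentalDomain, Measure.volume_eq_prod, ← Measure.prod_restrict]

lemma Aop_eq_jumpOp (ha_meas : Measurable a) (ha_nonneg : ∀ z, 0 ≤ a z) (ha_even : a.Even)
    (μ : (Fin d → ℝ) → (Fin d → ℝ) → ℝ → ℝ) (ρ : (Fin d → ℝ) → ℝ → ℝ) (s : ℝ) (ξ : Fin d → ℝ) :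
    Aop a μ s (fun η => ρ η s) ξ =
      jumpOp (volume.withDensity fun z => ENNReal.ofReal (a z)) μ ρ ξ s := by
  rw [jumpOp, integral_withDensity_eq_integral_toReal_smul ha_meas.ennreal_ofReal
    (Eventually.of_forall fun _ => ENNReal.ofReal_lt_top), Aop, ← integral_add_left_eq_self _ ξ]
  simp only [sub_add_cancel_left, ha_even _, ENNReal.toReal_ofReal (ha_nonneg _), smul_eq_mul,
    jumpFlux, mul_assoc]

end Torus

theorem stmt8_general {d : ℕ} (a : (Fin d → ℝ) → ℝ)
    (μ : (Fin d → ℝ) → (Fin d → ℝ) → ℝ → ℝ) (μp T : ℝ) (hT : 0 < T)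
    (hameas : Measurable a) (hanonneg : ∀ z, 0 ≤ a z) (haint : Integrable a)
    (hane : ¬ a =ᵐ[volume] 0) (hasymm : ∀ z, a (-z) = a z)
    (hμmeas : Measurable fun p : (Fin d → ℝ) × (Fin d → ℝ) × ℝ => μ p.1 p.2.1 p.2.2)
    (hμper : ∀ ξ η s, ∀ k : Fin d → ℤ,
      μ (ξ + fun i => (k i : ℝ)) (η + fun i => (k i : ℝ)) s = μ ξ η s)
    (hμsymm : ∀ ξ η s, μ ξ η s = μ η ξ s)
    (hμpos : ∀ ξ η s, 0 < μ ξ η s) (hμub : ∀ ξ η s, μ ξ η s ≤ μp)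
    (ρ : (Fin d → ℝ) → ℝ → ℝ)
    (hρmeas : Measurable fun p : (Fin d → ℝ) × ℝ => ρ p.1 p.2)
    (hρper : ∀ ξ s, ∀ k : Fin d → ℤ, ρ (ξ + fun i => (k i : ℝ)) s = ρ ξ s)
    (hρtime : ∀ᵐ ξ, ρ ξ T = ρ ξ 0)
    (hρL2 : IntegrableOn (fun p : (Fin d → ℝ) × ℝ => (ρ p.1 p.2) ^ 2)
      (cube d ×ˢ Set.Ioo (0 : ℝ) T))
    (hρeq : ∀ᵐ ξ ∂(volume : Measure (Fin d → ℝ)), ∀ s ∈ Set.Icc (0 : ℝ) T,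
      ρ ξ s = ρ ξ 0 - ∫ τ in (0 : ℝ)..s, Aop a μ τ (fun η => ρ η τ) ξ) :
    ∃ c : ℝ, ∀ᵐ p ∂(volume.restrict (cube d ×ˢ Set.Ioo (0 : ℝ) T)),
      ρ (Prod.fst p) (Prod.snd p) = c := by
  set α : Measure (Fin d → ℝ) := volume.withDensity fun z => ENNReal.ofReal (a z)
  have : IsFiniteMeasure α := isFiniteMeasure_withDensity_ofReal haint.2
  have : α.IsNegInvariant := isNegInvariant_withDensity fun z => by rw [hasymm]
  have : NeZero α := ⟨fun h => hane <| by
    filter_upwards [(withDensity_eq_zero_iff hameas.ennreal_ofReal.aemeasurable).1 h] with z hz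
    exact le_antisymm (ENNReal.ofReal_eq_zero.1 hz) (hanonneg z)⟩
  have hμ : IsPeriodicConductance (Pi.basisFun ℝ (Fin d)) μ :=
    { measurable := hμmeas
      symm := fun ξ η => funext (hμsymm ξ η)
      periodic := fun v hv ξ η => by
        obtain ⟨k, rfl⟩ := exists_intCast_eq_of_mem_span_basisFun hv
        exact funext fun s => hμper ξ η s k
      pos := hμpos
      bddAbove := ⟨μp, hμub⟩ }
  have hρ_per : ∀ v ∈ span ℤ (Set.range (Pi.basisFun ℝ (Fin d))), Function.Periodic ρ v := by
    intro v hv ξ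
    obtain ⟨k, rfl⟩ := exists_intCast_eq_of_mem_span_basisFun hv
    exact funext fun s => hρper ξ s k
  have hρ_memLp : MemLp (Function.uncurry ρ) 2
      (cellMeasure (Pi.basisFun ℝ (Fin d)) volume (volume.restrict (Set.Ioc 0 T))) := by
    rw [← restrict_Ioo_eq_restrict_Ioc, ← volume_restrict_cube_prod]
    exact (memLp_two_iff_integrable_sq hρmeas.aestronglyMeasurable).2 hρL2
  simp only [Aop_eq_jumpOp hameas hanonneg hasymm] at hρeq
  obtain ⟨c, hc⟩ := exists_ae_forall_eq_const_of_eq_sub_integral_jumpOp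
    (withDensity_absolutelyContinuous _ _) hT hμ hρmeas.of_uncurry_right hρ_per hρ_memLp
    hρtime hρeq
  refine ⟨c, ?_⟩
  have hcube : MeasurableSet (cube d) := .univ_pi fun _ => measurableSet_Ico
  filter_upwards [ae_restrict_of_ae (Measure.quasiMeasurePreserving_fst.ae hc),
    ae_restrict_mem (hcube.prod measurableSet_Ioo)] with p hp hp_mem
  exact hp p.2 (Set.Ioo_subset_Icc_self hp_mem.2)

/-- If `ρ ∈ H¹((0,1); L²(𝕋^d))` is time-periodic and solves the adjoint equation
`-∂_s ρ - A(s)ρ = 0` (in the equivalent integrated-in-time form), then `ρ` is constant a.e. on `𝕋^{d+1}`. -/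
theorem stmt8 {d : ℕ} (hd : 1 ≤ d)
    (a : (Fin d → ℝ) → ℝ) (μ : (Fin d → ℝ) → (Fin d → ℝ) → ℝ → ℝ) (μm μp : ℝ)
    (hameas : Measurable a) (hanonneg : ∀ z, 0 ≤ a z)
    (haint : Integrable a) (hamass : ∫ z, a z = 1)
    (hamom : Integrable (fun z => ‖z‖ ^ 2 * a z))
    (hasymm : ∀ z, a (-z) = a z)
    (hμmeas : Measurable fun p : (Fin d → ℝ) × (Fin d → ℝ) × ℝ => μ p.1 p.2.1 p.2.2)
    (hμper₁ : ∀ ξ η s, ∀ k : Fin d → ℤ, μ (ξ + fun i => (k i : ℝ)) η s = μ ξ η s)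
    (hμper₂ : ∀ ξ η s, ∀ k : Fin d → ℤ, μ ξ (η + fun i => (k i : ℝ)) s = μ ξ η s)
    (hμper₃ : ∀ ξ η s, μ ξ η (s + 1) = μ ξ η s)
    (hμsymm : ∀ ξ η s, μ ξ η s = μ η ξ s)
    (hμm : 0 < μm) (hμlb : ∀ ξ η s, μm ≤ μ ξ η s) (hμub : ∀ ξ η s, μ ξ η s ≤ μp)
    (ρ : (Fin d → ℝ) → ℝ → ℝ)
    (hρmeas : Measurable fun p : (Fin d → ℝ) × ℝ => ρ p.1 p.2)
    (hρper₁ : ∀ ξ s, ∀ k : Fin d → ℤ, ρ (ξ + fun i => (k i : ℝ)) s = ρ ξ s)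
    (hρper₂ : ∀ ξ s, ρ ξ (s + 1) = ρ ξ s)
    (hρL2 : IntegrableOn (fun p : (Fin d → ℝ) × ℝ => (ρ p.1 p.2) ^ 2)
      (cube d ×ˢ Set.Ioo (0 : ℝ) 1))
    (hρeq : ∀ᵐ ξ ∂(volume : Measure (Fin d → ℝ)), ∀ s ∈ Set.Icc (0 : ℝ) 1,
      ρ ξ s = ρ ξ 0 - ∫ τ in (0 : ℝ)..s, Aop a μ τ (fun η => ρ η τ) ξ) :
    ∃ c : ℝ, ∀ᵐ p ∂(volume.restrict (cube d ×ˢ Set.Ioo (0 : ℝ) 1)),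
      ρ (Prod.fst p) (Prod.snd p) = c := by
  refine stmt8_general a μ μp 1 one_pos hameas hanonneg haint (fun ha => ?_) hasymm hμmeas
    (fun ξ η s k => by rw [hμper₁, hμper₂]) hμsymm (fun ξ η s => hμm.trans_le (hμlb ξ η s)) hμub
    ρ hρmeas hρper₁ (.of_forall fun ξ => by simpa using hρper₂ ξ 0) hρL2 hρeq
  simp [integral_congr_ae ha] at hamass
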